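/- Let S₁, S₂, R₁, R₂ be finite families of treewidth patterns such that R₁ represents S₁ and R₂ represents S₂. Then R₁ ⋈̂ R₂ represents S₁ ⋈̂ S₂, where the exclusive join A ⋈̂ B of two families is the set of treewidth patterns p such that the number of pairs (p₁, p₂) ∈ A × B with p₁ ⋈ p₂ = p is odd. -/

import Mathlib

/-- A (candidate) treewidth pattern: a finite collection of blocks of labels in
`{0,…,k}`. -/
abbrev TWP (k : ℕ) := Finset (Finset (Fin (k + 1)))

/-- A treewidth pattern: a partition of a subset `L_p ⊆ {0,…,k}` containing `0`. -/
def IsTWPat {k : ℕ} (p : TWP k) : Prop :=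
  (∀ S ∈ p, S.Nonempty) ∧ (∀ S ∈ p, ∀ T ∈ p, S ≠ T → Disjoint S T) ∧
    ∃ S ∈ p, (0 : Fin (k + 1)) ∈ S

/-- The label set `L_p` of a pattern. -/
def labels {k : ℕ} (p : TWP k) : Finset (Fin (k + 1)) := p.sup id

/-- The glueing of the canonical forests of two treewidth patterns `p` and `q`: the
(identified) boundary vertices are represented by their labels, and each block gets a
star center adjacent to the labels it contains.  (Labels outside `L_p` are isolated and
affect neither acyclicity nor components meeting the boundary.) -/
def glueTP {k : ℕ} (p q : TWP k) :
    SimpleGraph (Fin (k + 1) ⊕ ({S // S ∈ p} ⊕ {S // S ∈ q})) :=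
  SimpleGraph.fromRel fun x y =>
    match x, y with
    | Sum.inl ℓ, Sum.inr (Sum.inl S) => ℓ ∈ S.1
    | Sum.inl ℓ, Sum.inr (Sum.inr S) => ℓ ∈ S.1
    | _, _ => False

/-- Compatibility `p ◁ q` of treewidth patterns: the label sets agree and the glueing of
the canonical forests is acyclic. -/
def Compat {k : ℕ} (p q : TWP k) : Prop :=
  labels p = labels q ∧ (glueTP p q).IsAcyclic

open scoped Classical in
/-- The join `p ⋈ q` of two treewidth patterns: `⊥` (i.e. `none`) if the label sets differ
or the glueing of the canonical forests contains a cycle; otherwise the pattern whose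
blocks are the label sets of the connected components of the glued forest. -/
noncomputable def joinTP {k : ℕ} (p q : TWP k) : Option (TWP k) :=
  if labels p = labels q ∧ (glueTP p q).IsAcyclic then
    some ((labels p).image fun ℓ =>
      (labels p).filter fun ℓ' => (glueTP p q).Reachable (Sum.inl ℓ) (Sum.inl ℓ'))
  else none

open scoped Classical in
/-- A family `R` of treewidth patterns represents a family `S` if for every treewidth
pattern `r`, the numbers of patterns of `R` and of `S` compatible with `r` agree
modulo 2. -/
def Represents {k : ℕ} (R S : Finset (TWP k)) : Prop :=
  ∀ r : TWP k, IsTWPat r →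
    (R.filter fun pp => Compat pp r).card % 2 = (S.filter fun pp => Compat pp r).card % 2

open scoped Classical in
/-- The exclusive join `A ⋈̂ B`: the set of patterns `p` such that the number of pairs
`(p₁, p₂) ∈ A × B` with `p₁ ⋈ p₂ = p` is odd (`⊥` excluded). -/
noncomputable def exJoin {k : ℕ} (A B : Finset (TWP k)) : Finset (TWP k) :=
  ((A ×ˢ B).biUnion fun q => (joinTP q.1 q.2).toFinset).filter fun pp =>
    ((A ×ˢ B).filter fun q => joinTP q.1 q.2 = some pp).card % 2 = 1

open SimpleGraph in
lemma card_cc_delete {V : Type*} [Finite V] (G : SimpleGraph V) {u v : V} (hadj : G.Adj u v)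
    (hn : ¬ (G.deleteEdges {s(u,v)}).Reachable u v) :
    Nat.card (G.deleteEdges {s(u,v)}).ConnectedComponent = Nat.card G.ConnectedComponent + 1 := by
  classical
  have := Fintype.ofFinite V
  set G' := G.deleteEdges {s(u,v)} with hG'
  have hle : G' ≤ G := G.deleteEdges_le _
  let ρ : V → G'.ConnectedComponent := fun x =>
    if G'.connectedComponentMk x = G'.connectedComponentMk v then G'.connectedComponentMk u
    else G'.connectedComponentMk x
  have hρa : ∀ a b, G.Adj a b → ρ a = ρ b := by
    intro a b hab
    by_cases h : s(a,b) = s(u,v)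
    · have huv : G'.connectedComponentMk u ≠ G'.connectedComponentMk v := by
        simpa [ConnectedComponent.eq] using hn
      rcases Sym2.eq_iff.1 h with ⟨rfl, rfl⟩ | ⟨rfl, rfl⟩ <;> simp [ρ]
    · have : G'.Adj a b := by simp [hG', deleteEdges_adj, hab, h]
      have h2 : G'.connectedComponentMk a = G'.connectedComponentMk b :=
        ConnectedComponent.sound this.reachable
      simp only [ρ, h2]
  have hρ : ∀ a b, G.Reachable a b → ρ a = ρ b := by
    rintro a b ⟨w⟩
    induction w with
    | nil => rfl
    | cons h _ ih => exact (hρa _ _ h).trans ih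
  let f : {c : G'.ConnectedComponent // c ≠ G'.connectedComponentMk v} → G.ConnectedComponent :=
    fun c => c.1.map (Hom.ofLE hle)
  have hf : Function.Bijective f := by
    constructor
    · rintro ⟨a, ha⟩ ⟨b, hb⟩ hab
      induction a using ConnectedComponent.ind with | _ a
      induction b using ConnectedComponent.ind with | _ b
      have h1 : G.Reachable a b := by
        simpa [f, ConnectedComponent.eq] using hab
      have h2 := hρ a b h1
      simp only [ρ, if_neg ha, if_neg hb] at h2
      exact Subtype.ext h2
    · intro c
      induction c using ConnectedComponent.ind with | _ a
      by_cases h : G'.connectedComponentMk a = G'.connectedComponentMk v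
      · refine ⟨⟨G'.connectedComponentMk u, by simpa [ConnectedComponent.eq] using hn⟩, ?_⟩
        have : G.Reachable a v := (ConnectedComponent.exact h).mono hle
        simp only [f, ConnectedComponent.map_mk]
        exact ConnectedComponent.sound (hadj.reachable.trans this.symm)
      · exact ⟨⟨_, h⟩, rfl⟩
  have h1 := Nat.card_congr (Equiv.ofBijective f hf)
  rw [← h1, Nat.card_eq_fintype_card, Nat.card_eq_fintype_card, Fintype.card_subtype_compl]
  have : 0 < Fintype.card G'.ConnectedComponent := Fintype.card_pos_iff.2 ⟨G'.connectedComponentMk v⟩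
  simp only [Fintype.card_unique]
  omega

open SimpleGraph in
lemma acyclic_card {V : Type*} [Finite V] (n : ℕ) : ∀ (G : SimpleGraph V), Nat.card G.edgeSet = n →
    G.IsAcyclic → Nat.card V = n + Nat.card G.ConnectedComponent := by
  induction n with
  | zero =>
    intro G hE hG
    have hb : G = ⊥ := by
      rw [← edgeSet_eq_empty]
      have := (Nat.card_eq_zero.1 hE).resolve_right (by simpa using (inferInstance : Finite _))
      exact Set.isEmpty_coe_sort.1 this
    subst hb
    rw [Nat.zero_add]
    refine Nat.card_congr (Equiv.ofBijective (fun v => connectedComponentMk _ v) ⟨?_, ?_⟩)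
    · intro a b h
      simpa using (ConnectedComponent.exact h)
    · intro c
      induction c using ConnectedComponent.ind with | _ a
      exact ⟨a, rfl⟩
  | succ n ih =>
    intro G hE hG
    have : Nonempty G.edgeSet := by
      by_contra h
      rw [not_nonempty_iff] at h
      simp at hE
    obtain ⟨e, he⟩ := this
    induction e using Sym2.ind with | _ u v
    have hbr := isAcyclic_iff_forall_isBridge.1 hG he
    rw [isBridge_iff] at hbr
    have hc := card_cc_delete G he hbr
    have h3 : Nat.card (G.deleteEdges {s(u,v)}).edgeSet = n := by
      rw [edgeSet_deleteEdges, Nat.card_coe_set_eq, Set.ncard_sdiff_singleton_of_mem he,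
        ← Nat.card_coe_set_eq, hE]
      rfl
    have := ih (G.deleteEdges {s(u,v)}) h3 (hG.anti (G.deleteEdges_le _))
    rw [this, hc]; ring

open SimpleGraph in
lemma acyclic_iff_card {V : Type*} [Finite V] (G : SimpleGraph V) :
    Nat.card V ≤ Nat.card G.edgeSet + Nat.card G.ConnectedComponent ∧
    (G.IsAcyclic ↔ Nat.card V = Nat.card G.edgeSet + Nat.card G.ConnectedComponent) := by
  obtain ⟨F, hle, hF, hr⟩ := G.exists_isAcyclic_reachable_eq_le
  have h1 := acyclic_card _ F rfl hF
  have h2 : Nat.card F.ConnectedComponent = Nat.card G.ConnectedComponent := by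
    unfold ConnectedComponent
    rw [hr]
  have h3 : F.edgeSet ⊆ G.edgeSet := edgeSet_subset_edgeSet.2 hle
  have h4 : Nat.card F.edgeSet ≤ Nat.card G.edgeSet := Nat.card_mono (Set.toFinite _) h3
  refine ⟨by omega, fun h => acyclic_card _ G rfl h, fun h => ?_⟩
  have : F.edgeSet = G.edgeSet := by
    apply Set.eq_of_subset_of_ncard_le h3
    rw [← Nat.card_coe_set_eq, ← Nat.card_coe_set_eq]; omega
  rw [← edgeSet_inj.1 this]; exact hF

lemma mem_labels {k : ℕ} {p : TWP k} {a : Fin (k+1)} : a ∈ labels p ↔ ∃ S ∈ p, a ∈ S := by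
  simp [labels, Finset.mem_sup]

/-- The setoid on labels of a pattern. -/
def stP {k : ℕ} (p : TWP k) : Setoid (Fin (k+1)) where
  r a b := a = b ∨ (a ∈ labels p ∧ b ∈ labels p ∧ ∀ S ∈ p, a ∈ S ↔ b ∈ S)
  iseqv := ⟨fun _ => Or.inl rfl, by grind, by grind⟩

lemma block_unique {k : ℕ} {p : TWP k} (hp : IsTWPat p) {S T : Finset (Fin (k+1))} (hS : S ∈ p)
    (hT : T ∈ p) {a : Fin (k+1)} (h1 : a ∈ S) (h2 : a ∈ T) : S = T := by
  by_contra h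
  exact Finset.disjoint_left.1 (hp.2.1 S hS T hT h) h1 h2

lemma stP_iff {k : ℕ} {p : TWP k} (hp : IsTWPat p) {a b : Fin (k+1)} :
    stP p a b ↔ a = b ∨ ∃ S ∈ p, a ∈ S ∧ b ∈ S := by
  change (a = b ∨ (a ∈ labels p ∧ b ∈ labels p ∧ ∀ S ∈ p, a ∈ S ↔ b ∈ S)) ↔ _
  constructor
  · rintro (h | ⟨h1, h2, h3⟩)
    · exact Or.inl h
    · obtain ⟨S, hS, ha⟩ := mem_labels.1 h1
      exact Or.inr ⟨S, hS, ha, (h3 S hS).1 ha⟩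
  · rintro (h | ⟨S, hS, ha, hb⟩)
    · exact Or.inl h
    · refine Or.inr ⟨mem_labels.2 ⟨S, hS, ha⟩, mem_labels.2 ⟨S, hS, hb⟩, fun T hT => ⟨fun h => ?_, fun h => ?_⟩⟩
      · rwa [← block_unique hp hS hT ha h]
      · rwa [← block_unique hp hS hT hb h]

/-- Number of classes. -/
noncomputable def ncl {k : ℕ} (s : Setoid (Fin (k+1))) : ℕ := Nat.card (Quotient s)

lemma ncl_stP {k : ℕ} {p : TWP k} (hp : IsTWPat p) :
    ncl (stP p) + (labels p).card = p.card + (k + 1) := by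
  classical
  let f : {S // S ∈ p} ⊕ {a // a ∉ labels p} → Quotient (stP p) :=
    Sum.elim (fun S => Quotient.mk _ (hp.1 S.1 S.2).choose) (fun a => Quotient.mk _ a.1)
  have hf : Function.Bijective f := by
    constructor
    · rintro (S | a) (T | b) h
      · have h1 := (stP_iff hp).1 (Quotient.exact h)
        have hS := (hp.1 S.1 S.2).choose_spec
        have hT := (hp.1 T.1 T.2).choose_spec
        congr 1
        apply Subtype.ext
        rcases h1 with h1 | ⟨U, hU, h1, h2⟩
        · rw [← h1] at hT
          exact block_unique hp S.2 T.2 hS hT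
        · exact (block_unique hp S.2 hU hS h1).trans (block_unique hp hU T.2 h2 hT)
      · exfalso
        have h1 := (stP_iff hp).1 (Quotient.exact h)
        have hS := (hp.1 S.1 S.2).choose_spec
        apply b.2
        rcases h1 with h1 | ⟨U, hU, h1, h2⟩
        · rw [← h1]; exact mem_labels.2 ⟨_, S.2, hS⟩
        · exact mem_labels.2 ⟨_, hU, h2⟩
      · exfalso
        have h1 := (stP_iff hp).1 (Quotient.exact h)
        have hS := (hp.1 T.1 T.2).choose_spec
        apply a.2
        rcases h1 with h1 | ⟨U, hU, h1, h2⟩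
        · rw [h1]; exact mem_labels.2 ⟨_, T.2, hS⟩
        · exact mem_labels.2 ⟨_, hU, h1⟩
      · have h1 := (stP_iff hp).1 (Quotient.exact h)
        congr 1
        apply Subtype.ext
        rcases h1 with h1 | ⟨U, hU, h1, h2⟩
        · exact h1
        · exact absurd (mem_labels.2 ⟨_, hU, h1⟩) a.2
    · intro c
      induction c using Quotient.ind with | _ a
      by_cases ha : a ∈ labels p
      · obtain ⟨S, hS, h⟩ := mem_labels.1 ha
        exact ⟨Sum.inl ⟨S, hS⟩, Quotient.sound ((stP_iff hp).2 (Or.inr ⟨S, hS, (hp.1 S hS).choose_spec, h⟩))⟩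
      · exact ⟨Sum.inr ⟨a, ha⟩, rfl⟩
  have h1 := Nat.card_congr (Equiv.ofBijective f hf)
  unfold ncl
  rw [← h1, Nat.card_sum, Nat.card_eq_fintype_card, Nat.card_eq_fintype_card,
    Fintype.card_subtype_compl]
  have := (labels p).card_le_univ
  simp at this ⊢
  omega

lemma sum_card_blocks {k : ℕ} {p : TWP k} (hp : IsTWPat p) :
    ∑ S ∈ p, S.card = (labels p).card := by
  classical
  rw [labels, Finset.sup_eq_biUnion, Finset.card_biUnion]
  · rfl
  · intro S hS T hT h; exact hp.2.1 S hS T hT h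

lemma glue_adj {k : ℕ} {p q : TWP k} (x y) : (glueTP p q).Adj x y ↔
    (∃ a S, x = Sum.inl a ∧ y = Sum.inr S ∧ a ∈ Sum.elim Subtype.val Subtype.val S) ∨
    (∃ a S, y = Sum.inl a ∧ x = Sum.inr S ∧ a ∈ Sum.elim Subtype.val Subtype.val S) := by
  rcases x with a | S | S <;> rcases y with b | T | T <;> simp [glueTP]

lemma glue_edges {k : ℕ} {p q : TWP k} (hp : IsTWPat p) (hq : IsTWPat q) :
    Nat.card (glueTP p q).edgeSet = (labels p).card + (labels q).card := by
  classical
  let f : (Σ S : {S // S ∈ p} ⊕ {S // S ∈ q}, {a // a ∈ Sum.elim Subtype.val Subtype.val S}) →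
      (glueTP p q).edgeSet := fun x => ⟨s(Sum.inl x.2.1, Sum.inr x.1), by
        rw [SimpleGraph.mem_edgeSet, glue_adj]
        exact Or.inl ⟨_, _, rfl, rfl, x.2.2⟩⟩
  have hf : Function.Bijective f := by
    constructor
    · rintro ⟨S, a, ha⟩ ⟨T, b, hb⟩ h
      have := congrArg Subtype.val h
      simp [f] at this
      obtain ⟨rfl, rfl⟩ := this
      rfl
    · rintro ⟨e, he⟩
      induction e using Sym2.ind with | _ x y
      rw [SimpleGraph.mem_edgeSet, glue_adj] at he
      rcases he with ⟨a, S, rfl, rfl, h⟩ | ⟨a, S, rfl, rfl, h⟩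
      · exact ⟨⟨S, a, h⟩, rfl⟩
      · exact ⟨⟨S, a, h⟩, Subtype.ext Sym2.eq_swap⟩
  rw [← Nat.card_congr (Equiv.ofBijective f hf), Nat.card_eq_fintype_card, Fintype.card_sigma,
    Fintype.sum_sum_type, ← sum_card_blocks hp, ← sum_card_blocks hq, ← Finset.sum_coe_sort p,
    ← Finset.sum_coe_sort q]
  congr 1 <;> exact Finset.sum_congr rfl fun S _ => Fintype.card_coe _

/-- Map from vertices of the glueing to classes. -/
noncomputable def vmap {k : ℕ} {p q : TWP k} (hp : IsTWPat p) (hq : IsTWPat q) :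
    Fin (k + 1) ⊕ ({S // S ∈ p} ⊕ {S // S ∈ q}) → Quotient (stP p ⊔ stP q)
  | Sum.inl a => Quotient.mk _ a
  | Sum.inr (Sum.inl S) => Quotient.mk _ (hp.1 S.1 S.2).choose
  | Sum.inr (Sum.inr S) => Quotient.mk _ (hq.1 S.1 S.2).choose

lemma vmap_adj {k : ℕ} {p q : TWP k} (hp : IsTWPat p) (hq : IsTWPat q) {x y}
    (h : (glueTP p q).Adj x y) : vmap hp hq x = vmap hp hq y := by
  have key : ∀ a S, a ∈ Sum.elim Subtype.val Subtype.val S →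
      vmap hp hq (Sum.inl a) = vmap hp hq (Sum.inr S) := by
    rintro a (S | S) h
    · exact Quotient.sound ((le_sup_left : stP p ≤ stP p ⊔ stP q)
        ((stP_iff hp).2 (Or.inr ⟨S.1, S.2, h, (hp.1 S.1 S.2).choose_spec⟩)))
    · exact Quotient.sound ((le_sup_right : stP q ≤ stP p ⊔ stP q)
        ((stP_iff hq).2 (Or.inr ⟨S.1, S.2, h, (hq.1 S.1 S.2).choose_spec⟩)))
  rw [glue_adj] at h
  rcases h with ⟨a, S, rfl, rfl, h⟩ | ⟨a, S, rfl, rfl, h⟩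
  · exact key _ _ h
  · exact (key _ _ h).symm

lemma vmap_reach {k : ℕ} {p q : TWP k} (hp : IsTWPat p) (hq : IsTWPat q) {x y}
    (h : (glueTP p q).Reachable x y) : vmap hp hq x = vmap hp hq y := by
  obtain ⟨w⟩ := h
  induction w with
  | nil => rfl
  | cons h _ ih => exact (vmap_adj hp hq h).trans ih

lemma reach_iff {k : ℕ} {p q : TWP k} (hp : IsTWPat p) (hq : IsTWPat q) {a b : Fin (k+1)} :
    (glueTP p q).Reachable (Sum.inl a) (Sum.inl b) ↔ (stP p ⊔ stP q) a b := by
  constructor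
  · intro h
    exact Quotient.exact (vmap_reach hp hq h)
  · intro h
    let R : Setoid (Fin (k+1)) := (glueTP p q).reachableSetoid.comap Sum.inl
    have : stP p ⊔ stP q ≤ R := by
      apply sup_le
      · intro a b h
        rcases (stP_iff hp).1 h with rfl | ⟨S, hS, h1, h2⟩
        · exact R.refl _
        · have e1 : (glueTP p q).Adj (Sum.inl a) (Sum.inr (Sum.inl ⟨S, hS⟩)) :=
            (glue_adj _ _).2 (Or.inl ⟨_, _, rfl, rfl, h1⟩)
          have e2 : (glueTP p q).Adj (Sum.inl b) (Sum.inr (Sum.inl ⟨S, hS⟩)) :=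
            (glue_adj _ _).2 (Or.inl ⟨_, _, rfl, rfl, h2⟩)
          exact e1.reachable.trans e2.reachable.symm
      · intro a b h
        rcases (stP_iff hq).1 h with rfl | ⟨S, hS, h1, h2⟩
        · exact R.refl _
        · have e1 : (glueTP p q).Adj (Sum.inl a) (Sum.inr (Sum.inr ⟨S, hS⟩)) :=
            (glue_adj _ _).2 (Or.inl ⟨_, _, rfl, rfl, h1⟩)
          have e2 : (glueTP p q).Adj (Sum.inl b) (Sum.inr (Sum.inr ⟨S, hS⟩)) :=
            (glue_adj _ _).2 (Or.inl ⟨_, _, rfl, rfl, h2⟩)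
          exact e1.reachable.trans e2.reachable.symm
    exact this h

lemma reach_label {k : ℕ} {p q : TWP k} (hp : IsTWPat p) (hq : IsTWPat q) (x) :
    ∃ a, (glueTP p q).Reachable (Sum.inl a) x := by
  rcases x with a | S | S
  · exact ⟨a, .rfl⟩
  · exact ⟨_, ((glue_adj _ _).2 (Or.inl ⟨_, _, rfl, rfl, (hp.1 S.1 S.2).choose_spec⟩)).reachable⟩
  · exact ⟨_, ((glue_adj _ _).2 (Or.inl ⟨_, _, rfl, rfl, (hq.1 S.1 S.2).choose_spec⟩)).reachable⟩

open SimpleGraph in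
lemma card_cc {k : ℕ} {p q : TWP k} (hp : IsTWPat p) (hq : IsTWPat q) :
    Nat.card (glueTP p q).ConnectedComponent = ncl (stP p ⊔ stP q) := by
  symm
  refine Nat.card_congr (Equiv.ofBijective (Quotient.lift
    (fun a => (glueTP p q).connectedComponentMk (Sum.inl a))
    (fun a b h => ConnectedComponent.sound ((reach_iff hp hq).2 h))) ⟨?_, ?_⟩)
  · intro a b h
    induction a using Quotient.ind with | _ a
    induction b using Quotient.ind with | _ b
    exact Quotient.sound ((reach_iff hp hq).1 (ConnectedComponent.exact h))
  · intro c
    induction c using ConnectedComponent.ind with | _ x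
    obtain ⟨a, ha⟩ := reach_label hp hq x
    exact ⟨Quotient.mk _ a, ConnectedComponent.sound ha⟩

lemma glue_main {k : ℕ} {p q : TWP k} (hp : IsTWPat p) (hq : IsTWPat q) :
    ncl (stP p) + ncl (stP q) ≤ (k + 1) + ncl (stP p ⊔ stP q) ∧
    ((glueTP p q).IsAcyclic ↔ ncl (stP p) + ncl (stP q) = (k + 1) + ncl (stP p ⊔ stP q)) := by
  have h := acyclic_iff_card (glueTP p q)
  rw [glue_edges hp hq, card_cc hp hq] at h
  have hv : Nat.card (Fin (k + 1) ⊕ ({S // S ∈ p} ⊕ {S // S ∈ q})) = k + 1 + (p.card + q.card) := by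
    simp [Nat.card_sum]
  rw [hv] at h
  have h1 := ncl_stP hp
  have h2 := ncl_stP hq
  refine ⟨by omega, h.2.trans ?_⟩
  omega

open scoped Classical in
/-- The join as a pattern. -/
noncomputable def jn {k : ℕ} (p q : TWP k) : TWP k :=
  (labels p).image fun ℓ =>
      (labels p).filter fun ℓ' => (glueTP p q).Reachable (Sum.inl ℓ) (Sum.inl ℓ')

lemma join_eq {k : ℕ} {p q j : TWP k} : joinTP p q = some j ↔ Compat p q ∧ j = jn p q := by
  unfold joinTP Compat jn
  split_ifs with h
  · simp [h, eq_comm]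
  · simp only [reduceCtorEq, false_iff]
    tauto

lemma labels_jn {k : ℕ} (p q : TWP k) : labels (jn p q) = labels p := by
  classical
  ext a
  rw [mem_labels]
  simp only [jn, Finset.mem_image]
  constructor
  · rintro ⟨S, ⟨b, hb, rfl⟩, h⟩
    exact (Finset.mem_filter.1 h).1
  · intro h
    exact ⟨_, ⟨a, h, rfl⟩, by simp [h]⟩

lemma jn_pat {k : ℕ} {p : TWP k} (hp : IsTWPat p) (q : TWP k) : IsTWPat (jn p q) := by
  classical
  refine ⟨?_, ?_, ?_⟩
  · intro S hS
    obtain ⟨b, hb, rfl⟩ := Finset.mem_image.1 hS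
    exact ⟨b, by simp [hb]⟩
  · intro S hS T hT
    obtain ⟨b, hb, rfl⟩ := Finset.mem_image.1 hS
    obtain ⟨c, hc, rfl⟩ := Finset.mem_image.1 hT
    contrapose!
    intro h
    obtain ⟨x, h1, h2⟩ := Finset.not_disjoint_iff.1 h
    rw [Finset.mem_filter] at h1 h2
    have hbc := h1.2.trans h2.2.symm
    ext y
    simp only [Finset.mem_filter]
    exact and_congr_right fun _ => ⟨fun h => hbc.symm.trans h, fun h => hbc.trans h⟩
  · have : 0 ∈ labels (jn p q) := by
      rw [labels_jn]; exact mem_labels.2 hp.2.2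
    exact mem_labels.1 this

lemma st_jn {k : ℕ} {p q : TWP k} (hp : IsTWPat p) (hq : IsTWPat q) (hl : labels p = labels q) :
    stP (jn p q) = stP p ⊔ stP q := by
  classical
  apply le_antisymm
  · intro a b h
    rcases (stP_iff (jn_pat hp q)).1 h with rfl | ⟨S, hS, h1, h2⟩
    · exact Setoid.refl' _ _
    · obtain ⟨c, hc, rfl⟩ := Finset.mem_image.1 hS
      rw [Finset.mem_filter] at h1 h2
      exact (reach_iff hp hq).1 (h1.2.symm.trans h2.2)
  · have key : ∀ a b, a ∈ labels p → b ∈ labels p → (stP p ⊔ stP q) a b → stP (jn p q) a b := by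
      intro a b ha hb h
      refine (stP_iff (jn_pat hp q)).2 (Or.inr ⟨_, Finset.mem_image.2 ⟨a, ha, rfl⟩, ?_, ?_⟩)
      · simp [ha]
      · simp only [Finset.mem_filter]
        exact ⟨hb, (reach_iff hp hq).2 h⟩
    apply sup_le
    · intro a b h
      rcases (stP_iff hp).1 h with rfl | ⟨S, hS, h1, h2⟩
      · exact Setoid.refl' _ _
      · exact key _ _ (mem_labels.2 ⟨S, hS, h1⟩) (mem_labels.2 ⟨S, hS, h2⟩)
          ((le_sup_left : stP p ≤ stP p ⊔ stP q) h)
    · intro a b h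
      rcases (stP_iff hq).1 h with rfl | ⟨S, hS, h1, h2⟩
      · exact Setoid.refl' _ _
      · exact key _ _ (hl ▸ mem_labels.2 ⟨S, hS, h1⟩) (hl ▸ mem_labels.2 ⟨S, hS, h2⟩)
          ((le_sup_right : stP q ≤ stP p ⊔ stP q) h)

/-- Triple compatibility. -/
def Tri {k : ℕ} (p q r : TWP k) : Prop := Compat p q ∧ Compat (jn p q) r

lemma tri_iff {k : ℕ} {p q r : TWP k} (hp : IsTWPat p) (hq : IsTWPat q) (hr : IsTWPat r) :
    Tri p q r ↔ labels p = labels q ∧ labels q = labels r ∧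
      ncl (stP p) + ncl (stP q) + ncl (stP r) = 2 * (k + 1) + ncl (stP p ⊔ stP q ⊔ stP r) := by
  unfold Tri Compat
  rw [labels_jn]
  by_cases hl : labels p = labels q
  · obtain ⟨h1, h2⟩ := glue_main hp hq
    obtain ⟨h3, h4⟩ := glue_main (jn_pat hp q) hr
    rw [h2, h4]
    rw [st_jn hp hq hl] at *
    rw [hl]
    constructor
    · rintro ⟨⟨_, a⟩, b, c⟩; exact ⟨rfl, b, by omega⟩
    · rintro ⟨_, b, c⟩; exact ⟨⟨rfl, by omega⟩, b, by omega⟩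
  · simp [hl]

lemma compat_comm {k : ℕ} {p q : TWP k} (hp : IsTWPat p) (hq : IsTWPat q) :
    Compat p q ↔ Compat q p := by
  unfold Compat
  rw [(glue_main hp hq).2, (glue_main hq hp).2, sup_comm, add_comm (ncl (stP p)), eq_comm (a := labels p)]

lemma tri_swap {k : ℕ} {p q r : TWP k} (hp : IsTWPat p) (hq : IsTWPat q) (hr : IsTWPat r) :
    Tri p q r ↔ Tri q p r := by
  rw [tri_iff hp hq hr, tri_iff hq hp hr, sup_comm (stP p), add_comm (ncl (stP p))]
  constructor <;> rintro ⟨a, b, c⟩ <;> exact ⟨a.symm, a.trans b, c⟩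

/-- Key associativity. -/
lemma tri_assoc {k : ℕ} {p q r : TWP k} (hp : IsTWPat p) (hq : IsTWPat q) (hr : IsTWPat r) :
    Tri p q r ↔ Compat q r ∧ Compat p (jn q r) := by
  rw [compat_comm hp (jn_pat hq r)]
  change _ ↔ Tri q r p
  rw [tri_iff hp hq hr, tri_iff hq hr hp, sup_assoc, sup_comm (stP p)]
  constructor
  · rintro ⟨a, b, c⟩; exact ⟨b, (a.trans b).symm, by omega⟩
  · rintro ⟨a, b, c⟩; exact ⟨(a.trans b).symm, a, by omega⟩

open scoped Classical in
lemma count_exJoin {k : ℕ} (A B : Finset (TWP k)) (r : TWP k) :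
    (((exJoin A B).filter fun pp => Compat pp r).card : ZMod 2) =
      ∑ p ∈ A, ∑ q ∈ B, if Tri p q r then 1 else 0 := by
  have hodd : ∀ n : ℕ, (n : ZMod 2) = if n % 2 = 1 then 1 else 0 := by
    intro n
    split_ifs with h
    · exact (ZMod.natCast_eq_one_iff_odd).2 (Nat.odd_iff.2 h)
    · exact (ZMod.natCast_eq_zero_iff_even).2 (Nat.even_iff.2 (by omega))
  unfold exJoin
  set U := ((A ×ˢ B).biUnion fun q => (joinTP q.1 q.2).toFinset) with hU
  rw [Finset.filter_filter, Finset.card_filter]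
  push_cast
  have : ∀ pp ∈ U, (if ((A ×ˢ B).filter fun q => joinTP q.1 q.2 = some pp).card % 2 = 1 ∧ Compat pp r
      then (1 : ZMod 2) else 0) =
      ∑ q ∈ A ×ˢ B, if joinTP q.1 q.2 = some pp ∧ Compat pp r then 1 else 0 := by
    intro pp _
    by_cases hc : Compat pp r
    · simp only [hc, and_true]
      rw [← hodd, Finset.card_filter]
      push_cast
      rfl
    · simp [hc]
  rw [Finset.sum_congr rfl this, Finset.sum_comm, ← Finset.sum_product' A B (fun p q => if Tri p q r then (1 : ZMod 2) else 0)]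
  apply Finset.sum_congr rfl
  rintro ⟨p, q⟩ hpq
  dsimp only
  by_cases hc : Compat p q
  · have hj : joinTP p q = some (jn p q) := join_eq.2 ⟨hc, rfl⟩
    have hmem : jn p q ∈ U := by
      rw [hU, Finset.mem_biUnion]
      exact ⟨(p, q), hpq, by simp [hj]⟩
    rw [Finset.sum_eq_single (jn p q)]
    · simp [hj, Tri, hc]
    · intro b _ hb
      rw [if_neg]
      rw [hj]
      rintro ⟨h, _⟩
      exact hb (Option.some.inj h).symm
    · intro h; exact absurd hmem h
  · rw [Finset.sum_eq_zero]
    · simp [Tri, hc]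
    · intro b _
      rw [if_neg]
      rw [join_eq]
      tauto

open scoped Classical in
lemma rep_sum {k : ℕ} {R S : Finset (TWP k)} (h : Represents R S) {r : TWP k} (hr : IsTWPat r) :
    (∑ p ∈ R, if Compat p r then (1 : ZMod 2) else 0) = ∑ p ∈ S, if Compat p r then 1 else 0 := by
  have := (ZMod.natCast_eq_natCast_iff' _ _ 2).2 (h r hr)
  rw [Finset.card_filter, Finset.card_filter] at this
  push_cast at this
  exact this

open scoped Classical in
lemma rep_tri {k : ℕ} {R S : Finset (TWP k)} (hR : ∀ p ∈ R, IsTWPat p) (hS : ∀ p ∈ S, IsTWPat p)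
    (h : Represents R S) {q r : TWP k} (hq : IsTWPat q) (hr : IsTWPat r) :
    (∑ p ∈ R, if Tri p q r then (1 : ZMod 2) else 0) = ∑ p ∈ S, if Tri p q r then 1 else 0 := by
  have e : ∀ X : Finset (TWP k), (∀ p ∈ X, IsTWPat p) →
      (∑ p ∈ X, if Tri p q r then (1 : ZMod 2) else 0) =
      if Compat q r then ∑ p ∈ X, (if Compat p (jn q r) then 1 else 0) else 0 := by
    intro X hX
    by_cases hc : Compat q r
    · rw [if_pos hc]
      exact Finset.sum_congr rfl fun p hp => by simp [tri_assoc (hX p hp) hq hr, hc]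
    · rw [if_neg hc]
      exact Finset.sum_eq_zero fun p hp => by simp [tri_assoc (hX p hp) hq hr, hc]
  rw [e R hR, e S hS, rep_sum h (jn_pat hq r)]

/-- If `R₁` represents `S₁` and `R₂` represents `S₂`, then the exclusive
join `R₁ ⋈̂ R₂` represents `S₁ ⋈̂ S₂`. -/
theorem exclusive_join_preserves_representation {k : ℕ}
    (S₁ S₂ R₁ R₂ : Finset (TWP k))
    (hS₁ : ∀ p ∈ S₁, IsTWPat p) (hS₂ : ∀ p ∈ S₂, IsTWPat p)
    (hR₁ : ∀ p ∈ R₁, IsTWPat p) (hR₂ : ∀ p ∈ R₂, IsTWPat p)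
    (h₁ : Represents R₁ S₁) (h₂ : Represents R₂ S₂) :
    Represents (exJoin R₁ R₂) (exJoin S₁ S₂) := by
  classical
  intro r hr
  rw [← ZMod.natCast_eq_natCast_iff', count_exJoin, count_exJoin]
  calc _ = ∑ p ∈ R₁, ∑ q ∈ S₂, (if Tri p q r then (1 : ZMod 2) else 0) := by
        refine Finset.sum_congr rfl fun p hp => ?_
        have := rep_tri hR₂ hS₂ h₂ (hR₁ p hp) hr
        rw [Finset.sum_congr rfl fun q hq => by rw [tri_swap (hR₁ p hp) (hR₂ q hq) hr], this]
        exact Finset.sum_congr rfl fun q hq => by rw [tri_swap (hR₁ p hp) (hS₂ q hq) hr]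
    _ = _ := by
        rw [Finset.sum_comm, Finset.sum_comm (s := S₁)]
        exact Finset.sum_congr rfl fun q hq => rep_tri hR₁ hS₁ h₁ (hS₂ q hq) hr
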